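/- arXiv:2306.01968 — 2 statements merged into one kernel-verified Lean document; each statement's English description precedes it below -/
import Mathlib

section
/- Drift and concentration of the biased allocation rule A_{ij} (Lemma 2): Fix an integer N ≥ 2, q ∈ (0,1], distinct i, j ∈ {1,…,N}, an integer t̄ ≥ 1, and set C = N(N−1)/2. Let (𝒢_t)_{t≥0} be a filtration and let (f_t, F_t), t = 1,…,t̄, be i.i.d. pairs with f_t ~ Bernoulli(q) and F_t uniform on the 2-element subsets of {1,…,N}, with f_t and F_t independent of each other, (f_t, F_t) independent of 𝒢_{t−1}, and (f_t, F_t) measurable with respect to 𝒢_t. For each k ∉ {i,j}, let B_t^k ⊆ D_t^k be 𝒢_{t−1}-measurable events. Define W_t = 1 if f_t = 1 and either F_t = {i,j}, or F_t = {j,k} and D_t^k occurs for some k ∉ {i,j}; W_t = −1 if f_t = 1 and F_t = {i,k} and B_t^k occurs for some k ∉ {i,j}; and W_t = 0 otherwise. (W_t is the net number of flex balls placed into bin j minus into bin i at step t under the allocation rule A_{ij}, which favors j over i.) Then: (i) E[Σ_{t=1}^{t̄} W_t] ≥ q·t̄/C; and (ii) there exists a constant α > 0, depending only on N and q, such that P(Σ_{t=1}^{t̄}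 W_t ≤ q·t̄/(2C)) ≤ exp(−α·t̄). -/
/-!
Write `p = q / C` for the probability that a given pair is drawn by a flex ball. Conditionally on
the past, `W_t = 1` with probability `p (1 + d)` and `W_t = -1` with probability `p b`, where `d`
and `b` count the `k ∉ {i, j}` for which `D_t^k`, resp. `B_t^k`, occurs; so `b ≤ d ≤ N`.
Hence for a function `φ` with `φ 0 = 1`, `φ 1 = 1 + a`, `φ (-1) = 1 + b'`, `b' ≥ 0`, `a + b' ≥ 0`,
and every bounded nonnegative `Y` determined by the past,
`E[Y φ(W_t)] ≤ (1 + p (a + N (a + b'))) E[Y]`; this is `allocation_one_step`.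

* `φ z = 1 - z` and `Y = 1` give `E[W_t] ≥ p`, which is the drift bound.
* `φ z = exp (-l z)` and `Y = exp (-l S_{t-1})` bound the Laplace transform of the sum `S_t`
  recursively. For `l = 1 / (4 (2N + 1))` the factor is at most `exp (-(3/4) l p)`
  (`chernoff_rate`), and Chernoff's inequality at level `p t̄ / 2` costs `exp (l p t̄ / 2)`,
  which leaves `α = p l / 4`.
-/

open MeasureTheory

attribute [local instance] Classical.propDecidable

open ProbabilityTheory in
/-- A variable measurable with respect to `m` factors from the indicator of an event independent
of `m`. -/
lemma integral_mul_indicator_of_indep {Ω : Type*} {m mΩ : MeasurableSpace Ω} {μ : Measure Ω}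
    [IsProbabilityMeasure μ] (hm : m ≤ mΩ) {Y : Ω → ℝ} (hY : Measurable[m] Y)
    {E : Set Ω} (hE : MeasurableSet E)
    (h : ∀ A, MeasurableSet[m] A → μ (A ∩ E) = μ A * μ E) :
    ∫ ω, Y ω * E.indicator 1 ω ∂μ = μ.real E * ∫ ω, Y ω ∂μ := by
  have hind : IndepFun Y (E.indicator (1 : Ω → ℝ)) μ := by
    have h1 : IndepSets {s | MeasurableSet[m] s} {E} μ := by
      rw [IndepSets_iff]
      rintro A B hA rfl
      exact h A hA
    have h2 : Indep m (MeasurableSpace.generateFrom {E}) μ := by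
      refine IndepSets.indep hm ?_ (@MeasurableSpace.isPiSystem_measurableSet Ω m) ?_ ?_ rfl h1
      · exact MeasurableSpace.generateFrom_le (by rintro _ rfl; exact hE)
      · exact IsPiSystem.singleton E
      · exact (@MeasurableSpace.generateFrom_measurableSet Ω m).symm
    rw [IndepFun_iff_Indep]
    refine indep_of_indep_of_le_left (indep_of_indep_of_le_right h2 ?_) hY.comap_le
    refine Measurable.comap_le ?_
    exact (@measurable_const ℝ Ω _ (MeasurableSpace.generateFrom {E}) 1).indicator
      (MeasurableSpace.measurableSet_generateFrom rfl)
  rw [hind.integral_fun_mul_eq_mul_integral (hY.mono hm le_rfl).aestronglyMeasurable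
    (measurable_one.indicator hE).aestronglyMeasurable, integral_indicator_one hE, mul_comm]

/-- `U` and `V` are the indicators of `W = 1` and `W = -1`, expanded over the possible drawn pairs:
these pairs are distinct, so at most one summand in `U` and `V` together is nonzero. -/
lemma allocation_pointwise {N : ℕ} {i j : Fin N} (hij : i ≠ j) (fb : Bool)
    (s : Finset (Fin N)) (B D : Fin N → Prop) (U V : ℝ) (W : ℤ)
    (hU : U = (if fb = true ∧ s = {i, j} then 1 else 0) +
      ∑ k ∈ Finset.univ.filter (fun k => k ≠ i ∧ k ≠ j),
        (if D k then 1 else 0) * (if fb = true ∧ s = {j, k} then 1 else 0))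
    (hV : V = ∑ k ∈ Finset.univ.filter (fun k => k ≠ i ∧ k ≠ j),
        (if B k then 1 else 0) * (if fb = true ∧ s = {i, k} then 1 else 0))
    (hW : W = if fb = true ∧ (s = {i, j} ∨ ∃ k, k ≠ i ∧ k ≠ j ∧ s = {j, k} ∧ D k) then 1
      else if fb = true ∧ ∃ k, k ≠ i ∧ k ≠ j ∧ s = {i, k} ∧ B k then -1 else 0) :
    (U = 1 ∧ V = 0 ∧ W = 1) ∨ (U = 0 ∧ V = 1 ∧ W = -1) ∨ (U = 0 ∧ V = 0 ∧ W = 0) := by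
  have pair : ∀ a k l : Fin N, k ≠ a → ({a, k} : Finset (Fin N)) = {a, l} → k = l := by
    intro a k l hk h
    have : k ∈ ({a, l} : Finset (Fin N)) := by rw [← h]; simp
    simp at this; tauto
  have hji : ∀ k l : Fin N, k ≠ i → l ≠ i → l ≠ j → ({j, k} : Finset (Fin N)) ≠ {i, l} := by
    intro k l hk hl hlj h
    have : i ∈ ({j, k} : Finset (Fin N)) := by rw [h]; simp
    simp at this; grind
  have hU0 : s ≠ {i, j} → (¬ ∃ k, k ≠ i ∧ k ≠ j ∧ s = {j, k} ∧ D k) → U = 0 := by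
    intro h1 h2
    rw [hU, Finset.sum_eq_zero]
    · simp [h1]
    · intro k hk
      simp only [Finset.mem_filter, Finset.mem_univ, true_and] at hk
      by_cases hd : D k
      · have : s ≠ {j, k} := fun h => h2 ⟨k, hk.1, hk.2, h, hd⟩
        simp [this]
      · simp [hd]
  have hV0 : (¬ ∃ k, k ≠ i ∧ k ≠ j ∧ s = {i, k} ∧ B k) → V = 0 := by
    intro h2
    rw [hV, Finset.sum_eq_zero]
    intro k hk
    simp only [Finset.mem_filter, Finset.mem_univ, true_and] at hk
    by_cases hd : B k
    · have : s ≠ {i, k} := fun h => h2 ⟨k, hk.1, hk.2, h, hd⟩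
      simp [this]
    · simp [hd]
  by_cases hf : fb = true
  swap
  · right; right
    simp [hf] at hU hV hW
    exact ⟨hU, hV, hW⟩
  by_cases h1 : s = {i, j}
  · left
    refine ⟨?_, hV0 ?_, ?_⟩
    · rw [hU, Finset.sum_eq_zero]
      · simp [hf, h1]
      · intro k hk
        simp only [Finset.mem_filter, Finset.mem_univ, true_and] at hk
        have : s ≠ {j, k} := by
          rw [h1, Finset.pair_comm]
          exact fun h => hk.1 (pair j i k hij h).symm
        simp [this]
    · rintro ⟨k, hk, hk', h, -⟩
      exact hk' (pair i j k hij.symm (h1.symm.trans h)).symm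
    · rw [hW, if_pos ⟨hf, Or.inl h1⟩]
  by_cases h2 : ∃ k, k ≠ i ∧ k ≠ j ∧ s = {j, k} ∧ D k
  · left
    refine ⟨?_, hV0 ?_, ?_⟩
    · obtain ⟨k, hki, hkj, hs, hd⟩ := h2
      rw [hU, Finset.sum_eq_single k]
      · rw [if_neg (fun h => h1 h.2), if_pos hd, if_pos ⟨hf, hs⟩]; norm_num
      · intro l _ hlk
        have : s ≠ {j, l} := fun h => hlk (pair j k l hkj (hs.symm.trans h)).symm
        simp [this]
      · intro h; simp [hki, hkj] at h
    · rintro ⟨l, hli, hlj, h, -⟩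
      obtain ⟨k, hki, hkj, hs, hd⟩ := h2
      exact hji k l hki hli hlj (hs.symm.trans h)
    · rw [hW, if_pos ⟨hf, Or.inr h2⟩]
  by_cases h3 : ∃ k, k ≠ i ∧ k ≠ j ∧ s = {i, k} ∧ B k
  · right; left
    refine ⟨hU0 h1 h2, ?_, ?_⟩
    · obtain ⟨k, hki, hkj, hs, hd⟩ := h3
      rw [hV, Finset.sum_eq_single k]
      · rw [if_pos hd, if_pos ⟨hf, hs⟩]; norm_num
      · intro l _ hlk
        have : s ≠ {i, l} := fun h => hlk (pair i k l hki (hs.symm.trans h)).symm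
        simp [this]
      · intro h; simp [hki, hkj] at h
    · rw [hW, if_neg (fun h => h.2.elim h1 h2), if_pos ⟨hf, h3⟩]
  · right; right
    exact ⟨hU0 h1 h2, hV0 h3, by rw [hW, if_neg (fun h => h.2.elim h1 h2), if_neg (fun h => h3 h.2)]⟩

/-- The exponential rate of one step. From `exp (±l) ≤ 1 ± l + l ^ 2` the left side is at most
`-l + (2 n + 1) l ^ 2`, and `l` is chosen so that `(2 n + 1) l = 1 / 4`. -/
lemma chernoff_rate {n l : ℝ} (hn : 0 ≤ n) (hl : l = 1 / (4 * (2 * n + 1))) :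
    (Real.exp (-l) - 1) + n * (Real.exp (-l) + Real.exp l - 2) ≤ -(3 / 4) * l := by
  have hpos : 0 < l := by rw [hl]; positivity
  have hl1 : l ≤ 1 := by
    rw [hl, div_le_one (by positivity)]; linarith
  have key : l * (2 * n + 1) = 1 / 4 := by rw [hl]; field_simp
  have a1 := (abs_le.mp (Real.abs_exp_sub_one_sub_id_le (x := l) (by rwa [abs_of_pos hpos]))).2
  have a2 := (abs_le.mp (Real.abs_exp_sub_one_sub_id_le (x := -l)
    (by rwa [abs_neg, abs_of_pos hpos]))).2
  have : n * (Real.exp (-l) + Real.exp l - 2) ≤ n * (2 * l ^ 2) :=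
    mul_le_mul_of_nonneg_left (by linarith) hn
  nlinarith

lemma measurable_allocation {N : ℕ} {i j : Fin N} {Ω : Type*} {m : MeasurableSpace Ω}
    {f : Ω → Bool} {F : Ω → Finset (Fin N)} (hf : Measurable f)
    (hF : ∀ s, MeasurableSet {ω | F ω = s}) {B D : Fin N → Set Ω}
    (hB : ∀ k, MeasurableSet (B k)) (hD : ∀ k, MeasurableSet (D k)) {W : Ω → ℤ}
    (hW : ∀ ω, W ω =
        if f ω = true ∧ (F ω = {i, j} ∨ ∃ k, k ≠ i ∧ k ≠ j ∧ F ω = {j, k} ∧ ω ∈ D k) then 1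
        else if f ω = true ∧ ∃ k, k ≠ i ∧ k ≠ j ∧ F ω = {i, k} ∧ ω ∈ B k then -1 else 0) :
    Measurable W := by
  have hft : MeasurableSet {ω | f ω = true} := hf (measurableSet_singleton true)
  have aux : ∀ (a : Fin N) (S : Fin N → Set Ω), (∀ k, MeasurableSet (S k)) →
      MeasurableSet {ω | ∃ k, k ≠ i ∧ k ≠ j ∧ F ω = {a, k} ∧ ω ∈ S k} := by
    intro a S hS
    rw [Set.ofPred_exists]
    refine MeasurableSet.iUnion fun k => ?_
    exact (MeasurableSet.const _).inter ((MeasurableSet.const _).inter ((hF _).inter (hS k)))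
  rw [funext hW]
  exact Measurable.ite (hft.inter ((hF _).union (aux j D hD))) measurable_const
    (Measurable.ite (hft.inter (aux i B hB)) measurable_const measurable_const)

/-- The one-step estimate. The sigma-algebra `m` is the past, and `p` is the probability that the
ball is a flex ball with a given flex set of size two. Besides the pair `{i, j}`, each
`k ∉ {i, j}` contributes `p (a E[Y; D k] + b E[Y; B k])`, at most `p (a + b) E[Y]` because
`B k ⊆ D k`. -/
lemma allocation_one_step {N : ℕ} {i j : Fin N} (hij : i ≠ j) {Ω : Type*}
    {m mΩ : MeasurableSpace Ω} {μ : Measure Ω} [IsProbabilityMeasure μ] (hm : m ≤ mΩ)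
    {f : Ω → Bool} {F : Ω → Finset (Fin N)} {p : ℝ} (hp : 0 ≤ p)
    (hE : ∀ s, MeasurableSet {ω | f ω = true ∧ F ω = s})
    (hprob : ∀ s : Finset (Fin N), s.card = 2 → μ.real {ω | f ω = true ∧ F ω = s} = p)
    (hind : ∀ (s : Finset (Fin N)) (A : Set Ω), MeasurableSet[m] A →
      μ (A ∩ {ω | f ω = true ∧ F ω = s}) = μ A * μ {ω | f ω = true ∧ F ω = s})
    {B D : Fin N → Set Ω} (hBD : ∀ k, B k ⊆ D k)
    (hB : ∀ k, MeasurableSet[m] (B k)) (hD : ∀ k, MeasurableSet[m] (D k)) {W : Ω → ℤ}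
    (hW : ∀ ω, W ω =
        if f ω = true ∧ (F ω = {i, j} ∨ ∃ k, k ≠ i ∧ k ≠ j ∧ F ω = {j, k} ∧ ω ∈ D k) then 1
        else if f ω = true ∧ ∃ k, k ≠ i ∧ k ≠ j ∧ F ω = {i, k} ∧ ω ∈ B k then -1 else 0)
    {Y : Ω → ℝ} (hY : Measurable[m] Y) (hY0 : ∀ ω, 0 ≤ Y ω) {M : ℝ} (hYM : ∀ ω, Y ω ≤ M)
    {φ : ℤ → ℝ} {a b : ℝ} (hφ0 : φ 0 = 1) (hφ1 : φ 1 = 1 + a) (hφ2 : φ (-1) = 1 + b)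
    (hb : 0 ≤ b) (hab : 0 ≤ a + b) :
    ∫ ω, Y ω * φ (W ω) ∂μ ≤ (1 + p * (a + N * (a + b))) * ∫ ω, Y ω ∂μ := by
  set K : Finset (Fin N) := Finset.univ.filter (fun k => k ≠ i ∧ k ≠ j) with hK
  let E : Finset (Fin N) → Set Ω := fun s => {ω | f ω = true ∧ F ω = s}
  have hYint : Integrable Y μ := by
    refine Integrable.of_bound (hY.mono hm le_rfl).aestronglyMeasurable M (ae_of_all _ fun ω => ?_)
    rw [Real.norm_eq_abs, abs_of_nonneg (hY0 ω)]; exact hYM ω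
  have hYS : ∀ S, MeasurableSet[m] S → Integrable (fun ω => Y ω * S.indicator 1 ω) μ := by
    intro S hS
    have : (fun ω => Y ω * S.indicator 1 ω) = S.indicator Y := by
      ext ω; by_cases h : ω ∈ S <;> simp [h]
    rw [this]; exact hYint.indicator (hm _ hS)
  have hYSE : ∀ S s, MeasurableSet[m] S →
      Integrable (fun ω => Y ω * S.indicator 1 ω * (E s).indicator 1 ω) μ := by
    intro S s hS
    have : (fun ω => Y ω * S.indicator 1 ω * (E s).indicator 1 ω)
        = (E s).indicator (fun ω => Y ω * S.indicator 1 ω) := by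
      ext ω; by_cases h : ω ∈ E s <;> simp [h]
    rw [this]; exact (hYS S hS).indicator (hE s)
  have hstep : ∀ S s, MeasurableSet[m] S → s.card = 2 →
      ∫ ω, Y ω * S.indicator 1 ω * (E s).indicator 1 ω ∂μ
        = p * ∫ ω, Y ω * S.indicator 1 ω ∂μ := by
    intro S s hS hs
    rw [integral_mul_indicator_of_indep (Y := fun ω => Y ω * S.indicator 1 ω) hm
      (hY.mul ((@measurable_const ℝ Ω _ m 1).indicator hS)) (hE s) (hind s), hprob s hs]
  -- The factor `Set.univ.indicator 1` puts the `{i, j}` term in the form handled by `hstep`.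
  have hpt : ∀ ω, Y ω * φ (W ω) = Y ω +
      (a * (Y ω * Set.univ.indicator 1 ω * (E {i, j}).indicator 1 ω) +
        ∑ k ∈ K, (a * (Y ω * (D k).indicator 1 ω * (E {j, k}).indicator 1 ω) +
          b * (Y ω * (B k).indicator 1 ω * (E {i, k}).indicator 1 ω))) := by
    intro ω
    have h := allocation_pointwise hij (f ω) (F ω) (fun k => ω ∈ B k) (fun k => ω ∈ D k)
      _ _ (W ω) rfl rfl (hW ω)
    rw [← hK] at h
    have e : Y ω +
      (a * (Y ω * Set.univ.indicator 1 ω * (E {i, j}).indicator 1 ω) +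
        ∑ k ∈ K, (a * (Y ω * (D k).indicator 1 ω * (E {j, k}).indicator 1 ω) +
          b * (Y ω * (B k).indicator 1 ω * (E {i, k}).indicator 1 ω)))
      = Y ω * (1 + a * ((if f ω = true ∧ F ω = {i, j} then 1 else 0) +
        ∑ k ∈ K, (if ω ∈ D k then 1 else 0) * (if f ω = true ∧ F ω = {j, k} then 1 else 0))
        + b * ∑ k ∈ K,
          (if ω ∈ B k then 1 else 0) * (if f ω = true ∧ F ω = {i, k} then 1 else 0)) := by
      simp only [Set.indicator_apply, Set.mem_univ, if_true, Pi.one_apply, E, Set.mem_ofPred_eq]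
      simp only [mul_add, Finset.sum_add_distrib, Finset.mul_sum]
      simp only [mul_one, mul_assoc, mul_left_comm a, mul_left_comm b, add_assoc]
    rw [e]
    rcases h with ⟨h1, h2, h3⟩ | ⟨h1, h2, h3⟩ | ⟨h1, h2, h3⟩ <;>
      rw [h1, h2, h3] <;> simp [hφ0, hφ1, hφ2]
  have hcard : ∀ c k : Fin N, c ≠ k → ({c, k} : Finset (Fin N)).card = 2 :=
    fun c k h => by convert Finset.card_pair h
  simp_rw [hpt]
  have hI1 : ∀ k, Integrable (fun ω => a * (Y ω * (D k).indicator 1 ω * (E {j, k}).indicator 1 ω))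
      μ := fun k => (hYSE _ _ (hD k)).const_mul a
  have hI2 : ∀ k, Integrable (fun ω => b * (Y ω * (B k).indicator 1 ω * (E {i, k}).indicator 1 ω))
      μ := fun k => (hYSE _ _ (hB k)).const_mul b
  have hI0 : Integrable
      (fun ω => a * (Y ω * Set.univ.indicator 1 ω * (E {i, j}).indicator 1 ω)) μ :=
    (hYSE _ _ (@MeasurableSet.univ _ m)).const_mul a
  have hIK : Integrable (fun ω =>
      ∑ k ∈ K, (a * (Y ω * (D k).indicator 1 ω * (E {j, k}).indicator 1 ω) +
          b * (Y ω * (B k).indicator 1 ω * (E {i, k}).indicator 1 ω))) μ :=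
    integrable_finsetSum _ fun k _ => (hI1 k).add (hI2 k)
  have hsplit := integral_add hYint (hI0.add hIK)
  simp only [Pi.add_apply] at hsplit
  have hsumI := integral_finsetSum K (fun k _ => (hI1 k).add (hI2 k))
  simp only [Pi.add_apply] at hsumI
  rw [hsplit, integral_add hI0 hIK, hsumI, integral_const_mul,
    hstep _ _ (@MeasurableSet.univ _ m) (hcard i j hij)]
  have hterm : ∀ k ∈ K, ∫ ω, (a * (Y ω * (D k).indicator 1 ω * (E {j, k}).indicator 1 ω) +
          b * (Y ω * (B k).indicator 1 ω * (E {i, k}).indicator 1 ω)) ∂μ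
        ≤ p * ((a + b) * ∫ ω, Y ω ∂μ) := by
    intro k hk
    simp only [hK, Finset.mem_filter, Finset.mem_univ, true_and] at hk
    rw [integral_add (hI1 k) (hI2 k), integral_const_mul, integral_const_mul,
      hstep _ _ (hD k) (hcard j k hk.2.symm), hstep _ _ (hB k) (hcard i k hk.1.symm)]
    have hle1 : ∫ ω, Y ω * (B k).indicator 1 ω ∂μ ≤ ∫ ω, Y ω * (D k).indicator 1 ω ∂μ := by
      refine integral_mono (hYS _ (hB k)) (hYS _ (hD k)) fun ω => ?_
      exact mul_le_mul_of_nonneg_left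
        (Set.indicator_le_indicator_of_subset (hBD k) (fun _ => zero_le_one) ω) (hY0 ω)
    have hle2 : ∫ ω, Y ω * (D k).indicator 1 ω ∂μ ≤ ∫ ω, Y ω ∂μ := by
      refine integral_mono (hYS _ (hD k)) hYint fun ω => ?_
      by_cases h : ω ∈ D k <;> simp [h, hY0 ω]
    have h1 := mul_le_mul_of_nonneg_left hle1 hb
    have h2 := mul_le_mul_of_nonneg_left hle2 hab
    calc _ = p * (a * ∫ ω, Y ω * (D k).indicator 1 ω ∂μ
          + b * ∫ ω, Y ω * (B k).indicator 1 ω ∂μ) := by ring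
      _ ≤ _ := mul_le_mul_of_nonneg_left (by linarith) hp
  have hsum := Finset.sum_le_card_nsmul K _ _ hterm
  have hcardK : (K.card : ℝ) ≤ N := by
    have := Finset.card_le_univ K
    rw [Fintype.card_fin] at this
    exact_mod_cast this
  have hY0' : 0 ≤ ∫ ω, Y ω ∂μ := integral_nonneg hY0
  have hKN := mul_le_mul_of_nonneg_right hcardK (mul_nonneg hp (mul_nonneg hab hY0'))
  rw [nsmul_eq_mul] at hsum
  simp only [Set.indicator_univ, Pi.one_apply, mul_one]
  linarith

/-- **Lemma 2** (drift and concentration of the biased allocation rule `A_{ij}`):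
with `C = N(N-1)/2`, for i.i.d. pairs `(f_t, F_t)` (`f_t ~ Bernoulli(q)`, `F_t` uniform
over 2-element subsets, independent of each other and of the past `𝒢_{t-1}`, measurable
w.r.t. `𝒢_t`), `𝒢_{t-1}`-measurable events `B_t^k ⊆ D_t^k`, and `W_t` the net number of
flex balls placed into bin `j` minus into bin `i` under the rule `A_{ij}`:
(i) `E[∑_{t=1}^{t̄} W_t] ≥ q t̄ / C`, and
(ii) there is `α > 0` depending only on `N, q` with
`P(∑_{t=1}^{t̄} W_t ≤ q t̄ / (2C)) ≤ exp(-α t̄)`. -/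
theorem biased_allocation_drift (N : ℕ) (hN : 2 ≤ N) (q : ℝ) (hq0 : 0 < q) (hq1 : q ≤ 1) :
    ∃ α : ℝ, 0 < α ∧
      ∀ (tbar : ℕ), 1 ≤ tbar → ∀ i j : Fin N, i ≠ j →
      ∀ (Ω : Type) (mΩ : MeasurableSpace Ω) (μ : Measure Ω), IsProbabilityMeasure μ →
      ∀ G : ℕ → MeasurableSpace Ω, Monotone G → (∀ t, G t ≤ mΩ) →
      ∀ (f : ℕ → Ω → Bool) (F : ℕ → Ω → Finset (Fin N)),
      (∀ t, 1 ≤ t → t ≤ tbar →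
        Measurable[G t] (f t) ∧ ∀ s : Finset (Fin N), MeasurableSet[G t] {ω | F t ω = s}) →
      (∀ t, 1 ≤ t → t ≤ tbar → μ {ω | f t ω = true} = ENNReal.ofReal q) →
      (∀ t, 1 ≤ t → t ≤ tbar → ∀ s : Finset (Fin N),
        μ {ω | F t ω = s} =
          if s.card = 2 then ENNReal.ofReal (1 / ((N : ℝ) * ((N : ℝ) - 1) / 2)) else 0) →
      (∀ t, 1 ≤ t → t ≤ tbar → ∀ (b : Bool) (s : Finset (Fin N)),
        μ {ω | f t ω = b ∧ F t ω = s} = μ {ω | f t ω = b} * μ {ω | F t ω = s}) →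
      (∀ t, 1 ≤ t → t ≤ tbar → ∀ (b : Bool) (s : Finset (Fin N)) (A : Set Ω),
        MeasurableSet[G (t - 1)] A →
        μ (A ∩ {ω | f t ω = b ∧ F t ω = s}) = μ A * μ {ω | f t ω = b ∧ F t ω = s}) →
      ∀ B D : ℕ → Fin N → Set Ω,
      (∀ t k, B t k ⊆ D t k) →
      (∀ t k, 1 ≤ t → t ≤ tbar →
        MeasurableSet[G (t - 1)] (B t k) ∧ MeasurableSet[G (t - 1)] (D t k)) →
      ∀ W : ℕ → Ω → ℤ,
      (∀ t ω, W t ω =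
        if f t ω = true ∧
            (F t ω = {i, j} ∨ ∃ k, k ≠ i ∧ k ≠ j ∧ F t ω = {j, k} ∧ ω ∈ D t k)
        then 1
        else if f t ω = true ∧ ∃ k, k ≠ i ∧ k ≠ j ∧ F t ω = {i, k} ∧ ω ∈ B t k
        then -1 else 0) →
      (q * (tbar : ℝ) / ((N : ℝ) * ((N : ℝ) - 1) / 2) ≤
          ∫ ω, (∑ t ∈ Finset.Icc 1 tbar, (W t ω : ℝ)) ∂μ) ∧
      μ {ω | (∑ t ∈ Finset.Icc 1 tbar, (W t ω : ℝ)) ≤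
            q * (tbar : ℝ) / (2 * ((N : ℝ) * ((N : ℝ) - 1) / 2))}
        ≤ ENNReal.ofReal (Real.exp (-α * (tbar : ℝ))) := by
  have hN' : (2 : ℝ) ≤ N := by exact_mod_cast hN
  set C : ℝ := (N : ℝ) * ((N : ℝ) - 1) / 2 with hC
  have hCpos : 0 < C := by
    have : 0 < (N : ℝ) * ((N : ℝ) - 1) := mul_pos (by linarith) (by linarith)
    rw [hC]; linarith
  set p : ℝ := q / C with hp
  have hppos : 0 < p := div_pos hq0 hCpos
  set l : ℝ := 1 / (4 * (2 * (N : ℝ) + 1)) with hl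
  have hlpos : 0 < l := by rw [hl]; positivity
  have hrate := chernoff_rate (n := (N : ℝ)) (by linarith) hl
  refine ⟨p * l / 4, by positivity, ?_⟩
  intro tbar _ i j hij Ω mΩ μ hμ G hG hGle f F hmeas hf hF hfF hind B D hBD hBDm W hW
  have hE : ∀ t, 1 ≤ t → t ≤ tbar → ∀ s, MeasurableSet {ω | f t ω = true ∧ F t ω = s} := by
    intro t h1 h2 s
    have := hmeas t h1 h2
    exact hGle t _ ((this.1 (measurableSet_singleton true)).inter (this.2 s))
  have hprob : ∀ t, 1 ≤ t → t ≤ tbar → ∀ s : Finset (Fin N), s.card = 2 →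
      μ.real {ω | f t ω = true ∧ F t ω = s} = p := by
    intro t h1 h2 s hs
    rw [measureReal_def, hfF t h1 h2, hf t h1 h2, hF t h1 h2, if_pos hs,
      ENNReal.toReal_mul, ENNReal.toReal_ofReal hq0.le, ENNReal.toReal_ofReal (by positivity), hp]
    ring
  have hWm : ∀ t, 1 ≤ t → t ≤ tbar → Measurable[G t] (W t) := by
    intro t h1 h2
    have hle := hG (Nat.sub_le t 1)
    exact measurable_allocation (m := G t) (hmeas t h1 h2).1 (hmeas t h1 h2).2
      (fun k => hle _ (hBDm t k h1 h2).1) (fun k => hle _ (hBDm t k h1 h2).2) (hW t)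
  have hWb : ∀ t ω, |(W t ω : ℝ)| ≤ 1 := by
    intro t ω
    rw [hW t ω]; split_ifs <;> simp
  have hWm' : ∀ t, 1 ≤ t → t ≤ tbar → Measurable[G t] (fun ω => (W t ω : ℝ)) :=
    fun t h1 h2 => (measurable_from_top (f := fun z : ℤ => (z : ℝ))).comp (hWm t h1 h2)
  have hWint : ∀ t, 1 ≤ t → t ≤ tbar → Integrable (fun ω => (W t ω : ℝ)) μ :=
    fun t h1 h2 => Integrable.of_bound
      ((hWm' t h1 h2).mono (hGle t) le_rfl).aestronglyMeasurable 1 (ae_of_all _ (hWb t))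
  constructor
  · have hmean : ∀ t ∈ Finset.Icc 1 tbar, p ≤ ∫ ω, (W t ω : ℝ) ∂μ := by
      intro t ht
      obtain ⟨h1, h2⟩ := Finset.mem_Icc.mp ht
      have := allocation_one_step (μ := μ) hij (hGle (t - 1)) hppos.le (hE t h1 h2) (hprob t h1 h2)
        (hind t h1 h2 true) (hBD t) (fun k => (hBDm t k h1 h2).1) (fun k => (hBDm t k h1 h2).2)
        (hW t) (Y := fun _ => 1) (@measurable_const _ _ _ (G (t - 1)) _)
        (fun _ => zero_le_one) (fun _ => le_rfl)
        (φ := fun z => 1 - (z : ℝ)) (a := -1) (b := 1)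
        (by simp) (by simp) (by norm_num) (by simp) (by simp)
      simp only [one_mul] at this
      rw [integral_sub (integrable_const _) (hWint t h1 h2)] at this
      simp at this
      linarith
    rw [integral_finsetSum _ fun t ht =>
      hWint t (Finset.mem_Icc.mp ht).1 (Finset.mem_Icc.mp ht).2]
    have := Finset.card_nsmul_le_sum _ _ _ hmean
    rw [Nat.card_Icc, nsmul_eq_mul, Nat.add_sub_cancel] at this
    refine le_trans (le_of_eq ?_) this
    rw [hp]; ring
  · let S : ℕ → Ω → ℝ := fun T ω => ∑ t ∈ Finset.Icc 1 T, (W t ω : ℝ)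
    have hSm : ∀ T, T ≤ tbar → Measurable[G T] (S T) := by
      intro T hT
      refine Finset.measurable_fun_sum _ fun t ht => ?_
      obtain ⟨h1, h2⟩ := Finset.mem_Icc.mp ht
      exact (hWm' t h1 (h2.trans hT)).mono (hG h2) le_rfl
    have hYm : ∀ T, T ≤ tbar → Measurable[G T] (fun ω => Real.exp (-l * S T ω)) := by
      intro T hT
      exact Real.measurable_exp.comp ((hSm T hT).const_mul (-l))
    have hYb : ∀ T ω, Real.exp (-l * S T ω) ≤ Real.exp (l * T) := by
      intro T ω
      have h : -S T ω ≤ T := by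
        have h := (abs_le.mp (Finset.abs_sum_le_sum_abs (fun t => (W t ω : ℝ))
          (Finset.Icc 1 T) |>.trans (Finset.sum_le_card_nsmul _ _ 1 fun t _ => hWb t ω))).1
        simp only [Nat.card_Icc, nsmul_eq_mul, Nat.add_sub_cancel, mul_one] at h
        simp only [S]; linarith
      rw [Real.exp_le_exp]
      nlinarith
    have hYint : ∀ T, T ≤ tbar → Integrable (fun ω => Real.exp (-l * S T ω)) μ := by
      intro T hT
      refine Integrable.of_bound ((hYm T hT).mono (hGle T) le_rfl).aestronglyMeasurable
        (Real.exp (l * T)) (ae_of_all _ fun ω => ?_)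
      rw [Real.norm_eq_abs, Real.abs_exp]; exact hYb T ω
    have hmgf : ∀ T, T ≤ tbar →
        ∫ ω, Real.exp (-l * S T ω) ∂μ ≤ Real.exp (-(3 / 4) * l * p * T) := by
      intro T
      induction T with
      | zero => intro _; simp [S]
      | succ T ih =>
        intro hT
        have hstep := allocation_one_step (μ := μ) hij (hGle T) hppos.le
          (hE (T + 1) (by omega) hT)
          (hprob (T + 1) (by omega) hT) (hind (T + 1) (by omega) hT true) (hBD (T + 1))
          (fun k => (hBDm (T + 1) k (by omega) hT).1) (fun k => (hBDm (T + 1) k (by omega) hT).2)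
          (hW (T + 1)) (Y := fun ω => Real.exp (-l * S T ω)) (hYm T (by omega))
          (fun _ => (Real.exp_pos _).le) (hYb T)
          (φ := fun z => Real.exp (-l * z)) (a := Real.exp (-l) - 1) (b := Real.exp l - 1)
          (by simp) (by simp) (by simp) (by have := Real.add_one_le_exp l; linarith)
          (by have := Real.add_one_le_exp l; have := Real.add_one_le_exp (-l); linarith)
        have hrec : ∀ ω, Real.exp (-l * S (T + 1) ω)
            = Real.exp (-l * S T ω) * Real.exp (-l * (W (T + 1) ω : ℝ)) := by
          intro ω
          simp only [S]
          rw [Finset.sum_Icc_succ_top (by omega), ← Real.exp_add]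
          ring_nf
        simp_rw [hrec]
        have hfac : 1 + p * ((Real.exp (-l) - 1) + N * ((Real.exp (-l) - 1) + (Real.exp l - 1)))
            ≤ Real.exp (-(3 / 4) * l * p) := by
          have h1 := Real.add_one_le_exp (-(3 / 4) * l * p)
          have h2 := mul_le_mul_of_nonneg_left hrate hppos.le
          linarith
        calc _ ≤ _ := hstep
          _ ≤ Real.exp (-(3 / 4) * l * p) * Real.exp (-(3 / 4) * l * p * T) :=
            mul_le_mul hfac (ih (by omega)) (integral_nonneg fun _ => (Real.exp_pos _).le)
              (Real.exp_pos _).le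
          _ = _ := by rw [← Real.exp_add]; push_cast; ring_nf
    have hch := ProbabilityTheory.measure_le_le_exp_mul_mgf (μ := μ) (X := S tbar) (t := -l)
      (q * (tbar : ℝ) / (2 * C)) (by linarith) (hYint tbar le_rfl)
    rw [← ofReal_measureReal]
    refine ENNReal.ofReal_le_ofReal (hch.trans ?_)
    calc _ ≤ Real.exp (- -l * (q * (tbar : ℝ) / (2 * C))) * Real.exp (-(3 / 4) * l * p * tbar) :=
          mul_le_mul_of_nonneg_left (hmgf tbar le_rfl) (Real.exp_pos _).le
      _ = _ := by
        rw [← Real.exp_add]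
        congr 1
        rw [hp]; field_simp; ring
end

section
/- Persistent-ordering event is unlikely under late flexing (Lemma 4): Fix integers 1 ≤ t₁ < t₂ and consider the balls-into-bins process in which balls 1,…,t₁ are placed in their preferred bins (ω(t) = 0) and, for t₁ < t ≤ t₂, ω(t) = 1 so that every flex ball is placed in the bin of its flex set with the smallest current load (ties broken in favor of the smallest index). Let a_s = 2√6·N(N−1)/q and assume t₂ − t₁ ≥ a_s·√(t₂·log t₂). For distinct i, j ∈ {1,…,N}, let F_{ij}^1 be the event that bin i attains the maximum load and bin j the minimum load at time t₂, and x_i(t) ≠ x_j(t) for all t ∈ {t₁,…,t₂}. Then there exist constants β > 0 and α₁ > 0, depending only on N and q, such that P(F_{ij}^1) ≤ β·t₁^{−2} + exp(−α₁·(t₂ − t₁)) for all i ≠ j. -/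
/-!
Only the ordering `x_j < x_i` on `[t₁, t₂]` matters. The difference `D = x_i - x_j` moves by at most
one per ball, so on the event it stays positive throughout `[t₁, t₂]`. Preferred placements are
symmetric in `i` and `j` and give `D` no drift. A flexed ball pushes `D` down: exchanging `i` and `j`
maps the flex sets whose least-loaded bin is `i` injectively into those whose least-loaded bin is
`j`, and it misses `{i, j}`; hence the drift is at most `-δ` with `δ = q / C(N,2)` as long as
`x_j < x_i` (`drift_flex`).

Let `W` be `exp (l D)`, killed as soon as `D ≤ 0` at some time `≥ t₁`. From
`exp y ≤ 1 + y + y²` for `|y| ≤ 1`, each step multiplies `E W` by at most `exp (l²)` before `t₁` and by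
at most `exp (l² - l δ)` after (`one_step`, `expec_killed_le`). The event has probability at most
`E W(t₂) ≤ exp (l² t₂ - l δ (t₂ - t₁))`, and `l = δ (t₂ - t₁) / (2 t₂)` together with the lower bound
on `t₂ - t₁` makes this at most `1 / t₂ ^ 2`. So `β = α₁ = 1` work.
-/

attribute [local instance] Classical.propDecidable

/-- An arrival type: (is-flex-ball, preferred bin, flex set). -/
abbrev Arrival (N : ℕ) := Bool × Fin N × Finset (Fin N)

/-- Mass of a single arrival: `f ~ Bernoulli(q)`, `p` uniform on `Fin N`,
`F` uniform on the 2-element subsets of `Fin N`, mutually independent. -/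
noncomputable def arrivalProb (N : ℕ) (q : ℝ) (a : Arrival N) : ℝ :=
  (if a.1 then q else 1 - q) * (1 / (N : ℝ)) *
    (if a.2.2.card = 2 then 1 / (N.choose 2 : ℝ) else 0)

/-- Mass of a sequence of `T` i.i.d. arrivals. -/
noncomputable def seqMass (N T : ℕ) (q : ℝ) (xs : Fin T → Arrival N) : ℝ :=
  ∏ t, arrivalProb N q (xs t)

/-- Expectation of a real random variable on the canonical space of `T` arrivals. -/
noncomputable def expec (N T : ℕ) (q : ℝ) (X : (Fin T → Arrival N) → ℝ) : ℝ :=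
  ∑ xs : Fin T → Arrival N, seqMass N T q xs * X xs

/-- Probability of an event on the canonical space of `T` arrivals. -/
noncomputable def prob (N T : ℕ) (q : ℝ) (A : (Fin T → Arrival N) → Prop) : ℝ :=
  ∑ xs : Fin T → Arrival N, if A xs then seqMass N T q xs else 0

/-- The least-loaded bin in `F` (ties broken in favor of the smallest index). -/
noncomputable def argminBin {N : ℕ} [NeZero N] (x : Fin N → ℕ) (F : Finset (Fin N)) : Fin N :=
  if hF : (F.filter fun i => ∀ j ∈ F, x i ≤ x j).Nonempty
  then (F.filter fun i => ∀ j ∈ F, x i ≤ x j).min' hF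
  else 0

/-- One step of the greedy (least-loaded) allocation: if the ball is a flex ball and
flexing is exerted, it goes to the least-loaded bin of its flex set (lexicographic
tie-breaking); otherwise it goes to its preferred bin. -/
noncomputable def greedyStep {N : ℕ} [NeZero N] (flex : Bool) (a : Arrival N)
    (x : Fin N → ℕ) : Fin N → ℕ :=
  fun i => if i = (if a.1 && flex then argminBin x a.2.2 else a.2.1) then x i + 1 else x i

/-- Load process under a flexing rule `dec` (which may depend on the whole realization,
the time, and the current loads), with greedy placement of flexed flex balls. -/
noncomputable def greedyLoads {N T : ℕ} [NeZero N]
    (dec : (Fin T → Arrival N) → ℕ → (Fin N → ℕ) → Bool)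
    (xs : Fin T → Arrival N) : ℕ → Fin N → ℕ
  | 0 => fun _ => 0
  | t + 1 =>
    if h : t < T then
      greedyStep (dec xs t (greedyLoads dec xs t)) (xs ⟨t, h⟩) (greedyLoads dec xs t)
    else greedyLoads dec xs t

/-- The maximum load over all bins. -/
noncomputable def maxLoad {N : ℕ} (x : Fin N → ℕ) : ℕ := Finset.univ.sup x

/-- `Gap(t)` : maximum load minus the average load `t/N`. -/
noncomputable def gap {N : ℕ} (x : Fin N → ℕ) (t : ℕ) : ℝ :=
  (maxLoad x : ℝ) - (t : ℝ) / (N : ℝ)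

/-- Number of flexed balls `M = ∑_t f_t ω(t)`. -/
noncomputable def numFlexed {N T : ℕ} [NeZero N]
    (dec : (Fin T → Arrival N) → ℕ → (Fin N → ℕ) → Bool) (xs : Fin T → Arrival N) : ℕ :=
  ∑ t : Fin T, if (xs t).1 && dec xs (t : ℕ) (greedyLoads dec xs (t : ℕ)) then 1 else 0

/-- Flexing rule of a "static"-type policy: flex exactly from period
`T - c·√(T log T)` on (ball `t` corresponds to step index `t-1`). -/
noncomputable def lateDec (N T : ℕ) (c : ℝ) :
    (Fin T → Arrival N) → ℕ → (Fin N → ℕ) → Bool :=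
  fun _ s _ =>
    if (T : ℝ) - c * Real.sqrt ((T : ℝ) * Real.log (T : ℝ)) ≤ ((s : ℝ) + 1) then true else false

/-- Flexing rule of the dynamic policy: flex at period `t = s+1` iff the current gap
`Gap(t-1)` is at least `a_d (T - t) q / N` with `a_d = 1/(5 C(N,2))`. -/
noncomputable def dynDec (N T : ℕ) (q : ℝ) :
    (Fin T → Arrival N) → ℕ → (Fin N → ℕ) → Bool :=
  fun _ s x =>
    if (1 / (5 * (N.choose 2 : ℝ))) * ((T : ℝ) - ((s : ℝ) + 1)) * q / (N : ℝ) ≤ gap x s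
    then true else false

/-- First time (within horizon `T`) at which the maximum load equals `S`. -/
noncomputable def hitTime {N : ℕ} (T S : ℕ) (x : ℕ → Fin N → ℕ) : ℕ :=
  if h : ((Finset.range (T + 1)).filter fun t => maxLoad (x t) = S).Nonempty
  then ((Finset.range (T + 1)).filter fun t => maxLoad (x t) = S).min' h
  else T

/-- The dynamic opaque policy: the flag records whether the trigger condition
`Gap(t) ≥ c_d (T-t) q / N` (with `c_d = 1/(10 C(N,2))`) has held at some time `≤ t`;
from then on every flex ball is flexed (greedy placement). Returns (flag, loads). -/
noncomputable def dynOpaque (N T : ℕ) [NeZero N] (q : ℝ) (xs : Fin T → Arrival N) :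
    ℕ → Bool × (Fin N → ℕ)
  | 0 =>
    (if (1 / (10 * (N.choose 2 : ℝ))) * (T : ℝ) * q / (N : ℝ) ≤ 0 then true else false,
      fun _ => 0)
  | t + 1 =>
    let p := dynOpaque N T q xs t
    let x' := if h : t < T then greedyStep p.1 (xs ⟨t, h⟩) p.2 else p.2
    (p.1 ||
      (if (1 / (10 * (N.choose 2 : ℝ))) * ((T : ℝ) - ((t : ℝ) + 1)) * q / (N : ℝ) ≤
          gap x' (t + 1)
       then true else false),
     x')

/-- Number of flexed balls `D = ∑_{t=1}^{R} f_t ω(t)` during one replenishment cycle,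
for a policy given by the flexing rule `dec`. -/
noncomputable def cycleFlexCount (N T : ℕ) [NeZero N]
    (dec : (Fin T → Arrival N) → ℕ → (Fin N → ℕ) → Bool) (S : ℕ)
    (xs : Fin T → Arrival N) : ℕ :=
  ∑ t ∈ Finset.range (hitTime T S (greedyLoads dec xs)),
    if h : t < T then (if (xs ⟨t, h⟩).1 && dec xs t (greedyLoads dec xs t) then 1 else 0)
    else 0

/-- Number of flexed balls during one replenishment cycle of the dynamic opaque policy. -/
noncomputable def dynFlexCount (N T : ℕ) [NeZero N] (q : ℝ) (S : ℕ)
    (xs : Fin T → Arrival N) : ℕ :=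
  ∑ t ∈ Finset.range (hitTime T S fun u => (dynOpaque N T q xs u).2),
    if h : t < T then (if (xs ⟨t, h⟩).1 && (dynOpaque N T q xs t).1 then 1 else 0) else 0

/-! ### The least-loaded bin -/

theorem argminBin_spec {N : ℕ} [NeZero N] (x : Fin N → ℕ) (F : Finset (Fin N))
    (hF : F.Nonempty) : argminBin x F ∈ F ∧ ∀ k ∈ F, x (argminBin x F) ≤ x k := by
  have h : (F.filter fun i => ∀ j ∈ F, x i ≤ x j).Nonempty := by
    obtain ⟨m, hm, hm'⟩ := Finset.exists_min_image F x hF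
    exact ⟨m, by simpa using ⟨hm, hm'⟩⟩
  have := Finset.min'_mem _ h
  rw [argminBin, dif_pos h]
  simpa using this

theorem argminBin_eq_of_lt {N : ℕ} [NeZero N] (x : Fin N → ℕ) (F : Finset (Fin N)) (j : Fin N)
    (hj : j ∈ F) (h : ∀ k ∈ F, k ≠ j → x j < x k) : argminBin x F = j := by
  obtain ⟨h1, h2⟩ := argminBin_spec x F ⟨j, hj⟩
  by_contra hne
  have := h _ h1 hne
  have := h2 j hj
  omega

/-- The two-element sets whose least-loaded bin is `i`, with `i` and `j` exchanged, together with
`{i, j}`, are distinct two-element sets whose least-loaded bin is `j`. -/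
theorem card_argmin_lt {N : ℕ} [NeZero N] (x : Fin N → ℕ) (i j : Fin N) (h : x j < x i) :
    ((Finset.univ : Finset (Finset (Fin N))).filter
        fun F => F.card = 2 ∧ argminBin x F = i).card + 1 ≤
      ((Finset.univ : Finset (Finset (Fin N))).filter
        fun F => F.card = 2 ∧ argminBin x F = j).card := by
  have hij : i ≠ j := by rintro rfl; omega
  set e : Finset (Fin N) ↪ Finset (Fin N) :=
    ⟨fun F => F.map (Equiv.swap i j).toEmbedding, Finset.map_injective _⟩ with he
  have hpair : ∀ F : Finset (Fin N), F.card = 2 → argminBin x F = i → i ∈ F ∧ j ∉ F ∧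
      ∀ k ∈ F, x i ≤ x k := by
    intro F hF hi
    obtain ⟨h1, h2⟩ := argminBin_spec x F (Finset.card_pos.1 (by omega))
    rw [hi] at h1 h2
    exact ⟨h1, fun hj => by have := h2 j hj; omega, h2⟩
  have hmem : ∀ F : Finset (Fin N), ∀ k, k ∈ e F ↔ Equiv.swap i j k ∈ F := by
    intro F k
    simp only [he, Function.Embedding.coeFn_mk, Finset.mem_map]
    constructor
    · rintro ⟨a, ha, rfl⟩; simpa using ha
    · intro hk; exact ⟨_, hk, by simp⟩
  have hnot : ({i, j} : Finset (Fin N)) ∉ ((Finset.univ : Finset (Finset (Fin N))).filter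
      fun F => F.card = 2 ∧ argminBin x F = i).map e := by
    intro hG
    simp only [Finset.mem_map, Finset.mem_filter, Finset.mem_univ, true_and] at hG
    obtain ⟨F, ⟨hF, hi⟩, hFe⟩ := hG
    obtain ⟨-, h2, -⟩ := hpair F hF hi
    have : i ∈ e F := by rw [hFe]; simp
    rw [hmem, Equiv.swap_apply_left] at this
    exact h2 this
  rw [← Finset.card_map e, ← Finset.card_cons hnot]
  apply Finset.card_le_card
  intro G hG
  simp only [Finset.mem_cons, Finset.mem_map, Finset.mem_filter, Finset.mem_univ,
    true_and] at hG ⊢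
  rcases hG with rfl | ⟨F, ⟨hF, hi⟩, rfl⟩
  · refine ⟨Finset.card_pair hij, argminBin_eq_of_lt _ _ _ (by simp) ?_⟩
    intro k hk hkj
    simp only [Finset.mem_insert, Finset.mem_singleton] at hk
    rcases hk with rfl | rfl
    · exact h
    · exact absurd rfl hkj
  · obtain ⟨h1, h2, h3⟩ := hpair F hF hi
    refine ⟨by simpa [he] using hF, argminBin_eq_of_lt _ _ _ ?_ ?_⟩
    · rw [hmem]; simpa using h1
    · intro k hk hkj
      rw [hmem] at hk
      by_cases hki : k = i
      · subst hki; exact h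
      · rw [Equiv.swap_apply_of_ne_of_ne hki hkj] at hk
        exact lt_of_lt_of_le h (h3 k hk)

/-! ### One arrival -/

theorem arrivalProb_nonneg {N : ℕ} {q : ℝ} (hq0 : 0 < q) (hq1 : q ≤ 1) (a : Arrival N) :
    0 ≤ arrivalProb N q a := by
  unfold arrivalProb
  have : 0 ≤ 1 - q := by linarith
  split_ifs <;> positivity

/-- Integrating out the three independent components of an arrival. -/
theorem sum_arrival {N : ℕ} (q : ℝ) (g : Arrival N → ℝ) :
    ∑ a, arrivalProb N q a * g a =
      ∑ F : Finset (Fin N), (if F.card = 2 then 1 / (N.choose 2 : ℝ) else 0) *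
        ((1 / (N : ℝ)) * ∑ p, (q * g (true, p, F) + (1 - q) * g (false, p, F))) := by
  rw [Fintype.sum_prod_type]
  simp only [Fintype.sum_bool, Fintype.sum_prod_type_right, Finset.mul_sum, arrivalProb]
  rw [← Finset.sum_add_distrib]
  refine Finset.sum_congr rfl fun F _ => ?_
  rw [← Finset.sum_add_distrib]
  refine Finset.sum_congr rfl fun p _ => ?_
  by_cases hF : F.card = 2 <;> simp [hF]
  ring

theorem sum_flexSet {N : ℕ} (P : Finset (Fin N) → Prop) :
    ∑ F : Finset (Fin N), (if F.card = 2 then 1 / (N.choose 2 : ℝ) else 0) *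
        (if P F then (1 : ℝ) else 0) =
      (Finset.univ.filter fun F : Finset (Fin N) => F.card = 2 ∧ P F).card *
        (1 / (N.choose 2 : ℝ)) := by
  rw [Finset.card_filter, Nat.cast_sum, Finset.sum_mul]
  refine Finset.sum_congr rfl fun F _ => ?_
  by_cases h1 : F.card = 2 <;> by_cases h2 : P F <;> simp [h1, h2]

theorem sum_flexSet_one {N : ℕ} (hN : 2 ≤ N) :
    ∑ F : Finset (Fin N), (if F.card = 2 then 1 / (N.choose 2 : ℝ) else 0) = 1 := by
  have hc : (N.choose 2 : ℝ) ≠ 0 := by exact_mod_cast (Nat.choose_pos hN).ne'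
  have hcard : (Finset.univ.filter fun F : Finset (Fin N) => F.card = 2).card = N.choose 2 := by
    rw [Finset.univ_filter_card_eq, Finset.card_powersetCard, Finset.card_univ, Fintype.card_fin]
  rw [← Finset.sum_filter, Finset.sum_const, nsmul_eq_mul, hcard, mul_one_div_cancel hc]

theorem sum_arrivalProb {N : ℕ} (hN : 2 ≤ N) (q : ℝ) : ∑ a, arrivalProb N q a = 1 := by
  have h := sum_arrival (N := N) q (fun _ => 1)
  have hN' : (N : ℝ) ≠ 0 := by positivity
  simp only [mul_one, Finset.sum_const, Finset.card_univ, Fintype.card_fin, nsmul_eq_mul] at h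
  rw [h]
  refine Eq.trans ?_ (sum_flexSet_one hN)
  refine Finset.sum_congr rfl fun F _ => ?_
  rw [add_sub_cancel, mul_one, one_div_mul_cancel hN', mul_one]

/-- The bin that receives the ball. -/
noncomputable def target {N : ℕ} [NeZero N] (flex : Bool) (a : Arrival N) (x : Fin N → ℕ) :
    Fin N :=
  if a.1 && flex then argminBin x a.2.2 else a.2.1

/-- The change of `x_i - x_j` caused by a ball placed in bin `b`. -/
noncomputable def jump {N : ℕ} (i j b : Fin N) : ℝ :=
  (if b = i then 1 else 0) - (if b = j then 1 else 0)

theorem greedyStep_sub {N : ℕ} [NeZero N] (flex : Bool) (a : Arrival N) (x : Fin N → ℕ)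
    (i j : Fin N) :
    (greedyStep flex a x i : ℝ) - greedyStep flex a x j =
      ((x i : ℝ) - x j) + jump i j (target flex a x) := by
  unfold greedyStep jump
  change ((if i = target flex a x then x i + 1 else x i : ℕ) : ℝ) -
    ((if j = target flex a x then x j + 1 else x j : ℕ) : ℝ) = _
  simp only [eq_comm (a := target flex a x)]
  split_ifs <;> push_cast <;> ring

theorem sum_jump {N : ℕ} (i j : Fin N) : ∑ p, jump i j p = 0 := by
  simp [jump, Finset.sum_sub_distrib]

theorem drift_noflex {N : ℕ} [NeZero N] (q : ℝ) (x : Fin N → ℕ) (i j : Fin N) :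
    ∑ a, arrivalProb N q a * jump i j (target false a x) = 0 := by
  rw [sum_arrival]
  simp [target, Finset.sum_add_distrib, ← Finset.mul_sum, sum_jump]

theorem drift_flex {N : ℕ} [NeZero N] (hN : 2 ≤ N) {q : ℝ} (hq0 : 0 < q) (x : Fin N → ℕ)
    (i j : Fin N) (h : x j < x i) :
    ∑ a, arrivalProb N q a * jump i j (target true a x) ≤ -(q / (N.choose 2 : ℝ)) := by
  have hN' : (N : ℝ) ≠ 0 := by positivity
  have hc : (0 : ℝ) < N.choose 2 := by exact_mod_cast Nat.choose_pos hN
  have key : ∑ a, arrivalProb N q a * jump i j (target true a x) =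
      q * (∑ F : Finset (Fin N), (if F.card = 2 then 1 / (N.choose 2 : ℝ) else 0) *
          (if argminBin x F = i then (1 : ℝ) else 0) -
        ∑ F : Finset (Fin N), (if F.card = 2 then 1 / (N.choose 2 : ℝ) else 0) *
          (if argminBin x F = j then (1 : ℝ) else 0)) := by
    rw [sum_arrival, ← Finset.sum_sub_distrib, Finset.mul_sum]
    refine Finset.sum_congr rfl fun F _ => ?_
    rw [Finset.sum_add_distrib, ← Finset.mul_sum, ← Finset.mul_sum]
    have h1 : ∑ p, jump i j (target true (false, p, F) x) = 0 := by
      simp [target, sum_jump]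
    have h2 : ∑ p : Fin N, jump i j (target true (true, p, F) x) =
        N * jump i j (argminBin x F) := by
      simp [target]
    rw [h1, h2, jump]
    field_simp
    ring
  have hsum : ∀ m : Fin N,
      ∑ F : Finset (Fin N), (if F.card = 2 then 1 / (N.choose 2 : ℝ) else 0) *
          (if argminBin x F = m then (1 : ℝ) else 0) =
        ((Finset.univ : Finset (Finset (Fin N))).filter
          fun F => F.card = 2 ∧ argminBin x F = m).card * (1 / (N.choose 2 : ℝ)) := by
    intro m
    convert sum_flexSet fun F => argminBin x F = m
  rw [key, hsum, hsum]
  have hcard : (((Finset.univ : Finset (Finset (Fin N))).filter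
        fun F => F.card = 2 ∧ argminBin x F = i).card : ℝ) + 1 ≤
      (((Finset.univ : Finset (Finset (Fin N))).filter
        fun F => F.card = 2 ∧ argminBin x F = j).card : ℝ) := by
    exact_mod_cast card_argmin_lt x i j h
  rw [← sub_mul, ← mul_assoc, mul_one_div, ← neg_div]
  gcongr
  nlinarith

/-- The exponential moment of one jump, for any bound `-d` on its mean. -/
theorem sum_exp_jump_le {N : ℕ} [NeZero N] (hN : 2 ≤ N) {q : ℝ} (hq0 : 0 < q) (hq1 : q ≤ 1)
    (b : Arrival N → Fin N) (i j : Fin N) {l d : ℝ} (hl0 : 0 ≤ l) (hl1 : l ≤ 1)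
    (hd : ∑ a, arrivalProb N q a * jump i j (b a) ≤ -d) :
    ∑ a, arrivalProb N q a * Real.exp (l * jump i j (b a)) ≤ Real.exp (l ^ 2 - l * d) := by
  have hterm : ∀ a, Real.exp (l * jump i j (b a)) ≤ 1 + l * jump i j (b a) + l ^ 2 := by
    intro a
    have hJ : |jump i j (b a)| ≤ 1 := by
      unfold jump; split_ifs <;> norm_num
    have hJ2 : (jump i j (b a)) ^ 2 ≤ 1 := by rw [← sq_abs]; exact pow_le_one₀ (abs_nonneg _) hJ
    have h1 : |l * jump i j (b a)| ≤ 1 := by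
      rw [abs_mul, abs_of_nonneg hl0]
      exact mul_le_one₀ hl1 (abs_nonneg _) hJ
    have h2 := (abs_le.1 (Real.abs_exp_sub_one_sub_id_le h1)).2
    nlinarith [mul_le_mul_of_nonneg_left hJ2 (sq_nonneg l)]
  calc ∑ a, arrivalProb N q a * Real.exp (l * jump i j (b a))
      ≤ ∑ a, arrivalProb N q a * (1 + l * jump i j (b a) + l ^ 2) :=
        Finset.sum_le_sum fun a _ =>
          mul_le_mul_of_nonneg_left (hterm a) (arrivalProb_nonneg hq0 hq1 a)
    _ = (1 + l ^ 2) * ∑ a, arrivalProb N q a +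
          l * ∑ a, arrivalProb N q a * jump i j (b a) := by
        rw [Finset.mul_sum, Finset.mul_sum, ← Finset.sum_add_distrib]
        exact Finset.sum_congr rfl fun a _ => by ring
    _ ≤ (l ^ 2 - l * d) + 1 := by
        rw [sum_arrivalProb hN]
        nlinarith [mul_le_mul_of_nonneg_left hd hl0]
    _ ≤ _ := Real.add_one_le_exp _

/-! ### The killed exponential of the load difference -/

/-- Loads when flexing starts after ball `t₁` (step indices `s ≥ t₁`). -/
noncomputable def lateLoads {N T : ℕ} [NeZero N] (t₁ : ℕ) (xs : Fin T → Arrival N) (t : ℕ) :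
    Fin N → ℕ :=
  greedyLoads (fun _ s _ => decide (t₁ ≤ s)) xs t

theorem lateLoads_succ {N T : ℕ} [NeZero N] (t₁ : ℕ) (xs : Fin T → Arrival N) (t : ℕ)
    (h : t < T) :
    lateLoads t₁ xs (t + 1) = greedyStep (decide (t₁ ≤ t)) (xs ⟨t, h⟩) (lateLoads t₁ xs t) := by
  simp [lateLoads, greedyLoads, h]

theorem lateLoads_snoc {N T : ℕ} [NeZero N] (t₁ : ℕ) (xs : Fin T → Arrival N) (a : Arrival N)
    (t : ℕ) (ht : t ≤ T) :
    lateLoads (T := T + 1) t₁ (Fin.snoc xs a) t = lateLoads t₁ xs t := by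
  induction t with
  | zero => rfl
  | succ t ih =>
    rw [lateLoads_succ _ _ _ (by omega), lateLoads_succ _ _ _ (by omega), ih (by omega)]
    congr 1
    exact Fin.snoc_castSucc (α := fun _ => Arrival N) (i := ⟨t, by omega⟩) a xs

theorem lateLoads_snoc_last {N T : ℕ} [NeZero N] (t₁ : ℕ) (xs : Fin T → Arrival N)
    (a : Arrival N) :
    lateLoads (T := T + 1) t₁ (Fin.snoc xs a) (T + 1) =
      greedyStep (decide (t₁ ≤ T)) a (lateLoads t₁ xs T) := by
  rw [lateLoads_succ _ _ _ (by omega), lateLoads_snoc _ _ _ _ le_rfl]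
  congr 1
  exact Fin.snoc_last (α := fun _ => Arrival N) a xs

/-- Bin `i` has been strictly above bin `j` at all times in `[t₁, T]`; vacuous when `T < t₁`. -/
def Above {N T : ℕ} [NeZero N] (t₁ : ℕ) (i j : Fin N) (xs : Fin T → Arrival N) : Prop :=
  ∀ t, t₁ ≤ t → t ≤ T → lateLoads t₁ xs t j < lateLoads t₁ xs t i

/-- `exp (l (x_i - x_j))` at the horizon, set to zero off the event `Above`. -/
noncomputable def killedExp {N T : ℕ} [NeZero N] (t₁ : ℕ) (i j : Fin N) (l : ℝ)
    (xs : Fin T → Arrival N) : ℝ :=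
  if Above t₁ i j xs then Real.exp (l * ((lateLoads t₁ xs T i : ℝ) - lateLoads t₁ xs T j)) else 0

theorem expec_succ {N T : ℕ} (q : ℝ) (X : (Fin (T + 1) → Arrival N) → ℝ) :
    expec N (T + 1) q X =
      ∑ xs : Fin T → Arrival N, seqMass N T q xs *
        ∑ a, arrivalProb N q a * X (Fin.snoc xs a) := by
  unfold expec
  rw [← Equiv.sum_comp (Fin.snocEquiv fun _ => Arrival N), Fintype.sum_prod_type_right]
  refine Finset.sum_congr rfl fun xs _ => ?_
  rw [Finset.mul_sum]
  refine Finset.sum_congr rfl fun a _ => ?_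
  change seqMass N (T + 1) q (Fin.snoc xs a) * X (Fin.snoc xs a) = _
  simp only [seqMass, Fin.prod_univ_castSucc, Fin.snoc_castSucc,
    Fin.snoc_last]
  ring

/-- Conditionally on the first `T` arrivals, the next one multiplies the killed exponential by at most
`exp (l²)` before flexing starts and by at most `exp (l² - l q / C(N,2))` afterwards. -/
theorem one_step {N T : ℕ} [NeZero N] (hN : 2 ≤ N) {q : ℝ} (hq0 : 0 < q) (hq1 : q ≤ 1)
    (t₁ : ℕ) (i j : Fin N) {l : ℝ} (hl0 : 0 ≤ l) (hl1 : l ≤ 1) (xs : Fin T → Arrival N) :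
    ∑ a, arrivalProb N q a * killedExp (T := T + 1) t₁ i j l (Fin.snoc xs a) ≤
      Real.exp (l ^ 2 - l * (if t₁ ≤ T then q / (N.choose 2 : ℝ) else 0)) *
        killedExp t₁ i j l xs := by
  by_cases hA : Above t₁ i j xs
  · set x := lateLoads t₁ xs T with hx
    have hW : killedExp t₁ i j l xs = Real.exp (l * ((x i : ℝ) - x j)) := if_pos hA
    have hle : ∀ a, killedExp (T := T + 1) t₁ i j l (Fin.snoc xs a) ≤
        Real.exp (l * ((x i : ℝ) - x j)) *
          Real.exp (l * jump i j (target (decide (t₁ ≤ T)) a x)) := by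
      intro a
      unfold killedExp
      split_ifs
      · rw [lateLoads_snoc_last, greedyStep_sub, ← Real.exp_add, mul_add]
      · positivity
    have hdrift : ∑ a, arrivalProb N q a * jump i j (target (decide (t₁ ≤ T)) a x) ≤
        -(if t₁ ≤ T then q / (N.choose 2 : ℝ) else 0) := by
      by_cases h : t₁ ≤ T
      · simpa [h] using drift_flex hN hq0 x i j (hA T h le_rfl)
      · simpa [h] using (drift_noflex q x i j).le
    have hstep := sum_exp_jump_le hN hq0 hq1 _ i j hl0 hl1 hdrift
    rw [hW, mul_comm]
    refine le_trans ?_ (mul_le_mul_of_nonneg_left hstep (Real.exp_nonneg _))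
    rw [Finset.mul_sum]
    refine Finset.sum_le_sum fun a _ => ?_
    rw [mul_left_comm]
    exact mul_le_mul_of_nonneg_left (hle a) (arrivalProb_nonneg hq0 hq1 a)
  · have h0 : ∀ a, killedExp (T := T + 1) t₁ i j l (Fin.snoc xs a) = 0 := by
      intro a
      refine if_neg fun h => hA fun t ht ht' => ?_
      have := h t ht (by omega)
      rwa [lateLoads_snoc _ _ _ _ ht'] at this
    simp only [h0, mul_zero, Finset.sum_const_zero]
    simp [killedExp, hA]

/-- The truncated subtraction `T - t₁` counts the steps with flexing. -/
theorem expec_killed_le {N : ℕ} [NeZero N] (hN : 2 ≤ N) {q : ℝ} (hq0 : 0 < q) (hq1 : q ≤ 1)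
    (t₁ : ℕ) (i j : Fin N) {l : ℝ} (hl0 : 0 ≤ l) (hl1 : l ≤ 1) (T : ℕ) :
    expec N T q (killedExp t₁ i j l) ≤
      Real.exp (l ^ 2 * T - l * (q / (N.choose 2 : ℝ)) * ((T - t₁ : ℕ) : ℝ)) := by
  induction T with
  | zero =>
    unfold expec
    simp only [seqMass, Finset.univ_eq_empty, Finset.prod_empty, one_mul, killedExp]
    simp only [lateLoads, greedyLoads]
    rw [Fintype.sum_unique]
    split_ifs <;> simp
  | succ T ih =>
    rw [expec_succ]
    have hmass : ∀ xs : Fin T → Arrival N, 0 ≤ seqMass N T q xs := fun xs =>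
      Finset.prod_nonneg fun t _ => arrivalProb_nonneg hq0 hq1 _
    have hsub : l ^ 2 * ((T + 1 : ℕ) : ℝ) - l * (q / (N.choose 2 : ℝ)) * ((T + 1 - t₁ : ℕ) : ℝ) =
        (l ^ 2 - l * (if t₁ ≤ T then q / (N.choose 2 : ℝ) else 0)) +
          (l ^ 2 * T - l * (q / (N.choose 2 : ℝ)) * ((T - t₁ : ℕ) : ℝ)) := by
      by_cases h : t₁ ≤ T
      · rw [if_pos h, Nat.succ_sub h]; push_cast; ring
      · rw [if_neg h, Nat.sub_eq_zero_of_le (by omega : T + 1 ≤ t₁),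
          Nat.sub_eq_zero_of_le (by omega : T ≤ t₁)]
        push_cast; ring
    rw [hsub, Real.exp_add]
    refine le_trans ?_ (mul_le_mul_of_nonneg_left ih (Real.exp_nonneg _))
    rw [expec, Finset.mul_sum]
    refine Finset.sum_le_sum fun xs _ => ?_
    rw [mul_left_comm]
    exact mul_le_mul_of_nonneg_left (one_step hN hq0 hq1 t₁ i j hl0 hl1 xs) (hmass xs)

/-- The difference `x_i - x_j` cannot change sign without vanishing, so the final order determines
the order on all of `[t₁, T]`. -/
theorem above_of_ne {N T : ℕ} [NeZero N] (t₁ : ℕ) (i j : Fin N) (xs : Fin T → Arrival N)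
    (hend : lateLoads t₁ xs T j ≤ lateLoads t₁ xs T i)
    (hne : ∀ t, t₁ ≤ t → t ≤ T → lateLoads t₁ xs t i ≠ lateLoads t₁ xs t j) :
    Above t₁ i j xs := by
  intro t ht htT
  induction htT using Nat.decreasingInduction with
  | self => exact lt_of_le_of_ne hend (hne T ht le_rfl).symm
  | of_succ t htT ih =>
    have h := ih (by omega)
    have hn := hne t ht (by omega)
    rw [lateLoads_succ _ _ _ htT] at h
    have h1 : greedyStep (decide (t₁ ≤ t)) (xs ⟨t, htT⟩) (lateLoads t₁ xs t) i ≤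
        lateLoads t₁ xs t i + 1 := by
      unfold greedyStep; split_ifs <;> omega
    have h2 : lateLoads t₁ xs t j ≤
        greedyStep (decide (t₁ ≤ t)) (xs ⟨t, htT⟩) (lateLoads t₁ xs t) j := by
      unfold greedyStep; split_ifs <;> omega
    omega

/-- The choice of the exponent `l`, with `D = t₂ - t₁` and `d = q / C(N,2)`. -/
theorem exponent_bound {d D t : ℝ} (ht : 0 < t)
    (h : 8 * (t * Real.log t) ≤ (d * D) ^ 2) :
    Real.exp ((d * D / (2 * t)) ^ 2 * t - d * D / (2 * t) * d * D) ≤ 1 / t ^ 2 := by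
  have h1 : (d * D / (2 * t)) ^ 2 * t - d * D / (2 * t) * d * D = -((d * D) ^ 2 / (4 * t)) := by
    field_simp
    ring
  have h2 : 2 * Real.log t ≤ (d * D) ^ 2 / (4 * t) := by
    rw [le_div_iff₀ (by positivity)]
    linarith
  have h3 : Real.exp (-(2 * Real.log t)) = 1 / t ^ 2 := by
    rw [Real.exp_neg, two_mul, Real.exp_add, Real.exp_log ht, one_div, sq]
  rw [h1, ← h3]
  exact Real.exp_le_exp.2 (by linarith)

/-- **Lemma 4** (persistent-ordering event is unlikely under late flexing): for the
process that places balls `1,…,t₁` in their preferred bins and flexes every flex ball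
for `t₁ < t ≤ t₂` (greedy placement), if `t₂ - t₁ ≥ a_s √(t₂ log t₂)` with
`a_s = 2√6 N(N-1)/q`, then the event `F_{ij}^1` (bin `i` maximal and bin `j` minimal at
`t₂`, with `x_i(t) ≠ x_j(t)` for all `t ∈ {t₁,…,t₂}`) has probability at most
`β t₁⁻² + exp(-α₁ (t₂ - t₁))`, for constants `β, α₁ > 0` depending only on `N, q`. -/
theorem persistent_ordering_unlikely (N : ℕ) [NeZero N] (hN : 2 ≤ N) (q : ℝ)
    (hq0 : 0 < q) (hq1 : q ≤ 1) :
    ∃ β : ℝ, 0 < β ∧ ∃ α₁ : ℝ, 0 < α₁ ∧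
      ∀ t₁ t₂ : ℕ, 1 ≤ t₁ → t₁ < t₂ →
        (2 * Real.sqrt 6 * (N : ℝ) * ((N : ℝ) - 1) / q) *
            Real.sqrt ((t₂ : ℝ) * Real.log (t₂ : ℝ)) ≤ (t₂ : ℝ) - (t₁ : ℝ) →
        ∀ i j : Fin N, i ≠ j →
          prob N t₂ q (fun xs =>
              (∀ k, greedyLoads (fun _ s _ => decide (t₁ ≤ s)) xs t₂ k ≤
                  greedyLoads (fun _ s _ => decide (t₁ ≤ s)) xs t₂ i) ∧
              (∀ k, greedyLoads (fun _ s _ => decide (t₁ ≤ s)) xs t₂ j ≤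
                  greedyLoads (fun _ s _ => decide (t₁ ≤ s)) xs t₂ k) ∧
              (∀ t, t₁ ≤ t → t ≤ t₂ →
                greedyLoads (fun _ s _ => decide (t₁ ≤ s)) xs t i ≠
                  greedyLoads (fun _ s _ => decide (t₁ ≤ s)) xs t j))
            ≤ β / (t₁ : ℝ) ^ 2 + Real.exp (-α₁ * ((t₂ : ℝ) - (t₁ : ℝ))) := by
  refine ⟨1, one_pos, 1, one_pos, ?_⟩
  intro t₁ t₂ h1 h12 hlate i j hij
  have hNr : (2 : ℝ) ≤ N := by exact_mod_cast hN
  have ht1 : (1 : ℝ) ≤ t₁ := by exact_mod_cast h1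
  have ht12 : (t₁ : ℝ) < t₂ := by exact_mod_cast h12
  have ht2 : (0 : ℝ) < t₂ := by linarith
  set D : ℝ := (t₂ : ℝ) - t₁ with hD
  set d : ℝ := q / (N.choose 2 : ℝ) with hd
  have hd_eq : d = 2 * q / ((N : ℝ) * (N - 1)) := by
    rw [hd, Nat.cast_choose_two]
    field_simp
  have hNN : 2 ≤ (N : ℝ) * (N - 1) := by nlinarith
  have hd0 : 0 < d := by rw [hd_eq]; positivity
  have hd1 : d ≤ 1 := by
    rw [hd_eq, div_le_one (by linarith)]
    linarith
  have hD0 : 0 < D := by linarith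
  have hDt : D ≤ t₂ := by linarith
  have hlog : 0 ≤ (t₂ : ℝ) * Real.log t₂ :=
    mul_nonneg ht2.le (Real.log_nonneg (by linarith))
  -- `d * a_s = 4 √6`, hence `(d D)² ≥ 96 t₂ log t₂`.
  have hdD : 4 * Real.sqrt 6 * Real.sqrt ((t₂ : ℝ) * Real.log t₂) ≤ d * D := by
    have h := mul_le_mul_of_nonneg_left hlate hd0.le
    refine le_trans (le_of_eq ?_) h
    rw [hd_eq]
    have : (N : ℝ) - 1 ≠ 0 := by linarith
    field_simp
    ring
  have hsq : 8 * ((t₂ : ℝ) * Real.log t₂) ≤ (d * D) ^ 2 := by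
    have h := pow_le_pow_left₀ (by positivity) hdD 2
    rw [mul_pow, mul_pow, Real.sq_sqrt (by norm_num), Real.sq_sqrt hlog] at h
    linarith
  set l : ℝ := d * D / (2 * t₂) with hl
  have hl0 : 0 ≤ l := by positivity
  have hl1 : l ≤ 1 := by
    rw [hl, div_le_one (by positivity)]
    nlinarith
  have hprob : ∀ A : (Fin t₂ → Arrival N) → Prop, (∀ xs, A xs → Above t₁ i j xs) →
      prob N t₂ q A ≤ expec N t₂ q (killedExp t₁ i j l) := by
    intro A hA
    refine Finset.sum_le_sum fun xs _ => ?_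
    have hmass : 0 ≤ seqMass N t₂ q xs :=
      Finset.prod_nonneg fun t _ => arrivalProb_nonneg hq0 hq1 _
    have hW0 : 0 ≤ killedExp t₁ i j l xs := by
      unfold killedExp; split_ifs <;> positivity
    split_ifs with h
    · have hab := hA xs h
      have hlt : (lateLoads t₁ xs t₂ j : ℝ) < lateLoads t₁ xs t₂ i := by
        exact_mod_cast hab t₂ h12.le le_rfl
      rw [killedExp, if_pos hab]
      exact le_mul_of_one_le_right hmass
        (Real.one_le_exp (mul_nonneg hl0 (by linarith)))
    · positivity
  have hexp := expec_killed_le hN hq0 hq1 t₁ i j hl0 hl1 t₂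
  rw [Nat.cast_sub h12.le, ← hd, ← hD] at hexp
  have hfin := exponent_bound (d := d) (D := D) ht2 hsq
  have hle : 1 / (t₂ : ℝ) ^ 2 ≤ 1 / (t₁ : ℝ) ^ 2 := by gcongr
  have hpos := Real.exp_nonneg (-1 * D)
  refine le_trans (hprob _ ?_) (by linarith)
  rintro xs ⟨hmax, -, hne⟩
  exact above_of_ne t₁ i j xs (hmax j) hne
end
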